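/- Fix a positive integer k. Let G = (V,D,μ) be a multigraph with multiplicities in which every μ(d) is an integer multiple of k, and let G′ = (V,D,μ′) where μ′(d) = μ(d)/k for each d ∈ D. Then T(G; −i cot(π/4k), e^{iπ/2k}) = ( √2 · e^{iπ(1−k)/(4k)} · sin(π/4k) )^{−r(G)} · T(G′; −i, i). -/

import Mathlib

/-!
The proof goes through the random-cluster expansion.  Whenever `(x - 1) * (y - 1) = q ≠ 0`,
the Tutte polynomial is `(x - 1) ^ r(E)` times the partition function
`∑_A q ^ (-r(A)) * (y - 1) ^ |A|` (`tutte_eq_partition`); this uses `r(A) ≤ |A|`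
(`rk_le_ncard`) and `r(A) ≤ r(E)`, since the exponents are natural numbers.

The rank of `A` depends only on the set `S ⊆ D` of pairs having a copy in `A`.  Summing over all
`A` with given `S` turns the partition function into
`∑_S q ^ (-r(S)) * ∏_{d ∈ S} (y ^ μ(d) - 1)` (`partition_multi`), so it depends on `y` and `μ`
only through the numbers `y ^ μ(d)`.  Both points of the theorem lie on the hyperbola
`(x - 1) * (y - 1) = 2`, and `exp(iπ/2k) ^ k = i` gives `exp(iπ/2k) ^ μ(d) = i ^ (μ(d)/k)`.
Hence both partition functions agree, and the ratio of the two Tutte evaluations is the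
`r(G)`-th power of the ratio of the two values of `x - 1`.
-/


open scoped Classical

noncomputable section

/-- A multigraph is encoded by a map `ε : E → Sym2 V` assigning to each edge index its
unordered pair of endpoints.  `graphOf ε A` is the simple graph on `V` whose edges are the
endpoint pairs of the edges in `A`. -/
def graphOf {V E : Type*} (ε : E → Sym2 V) (A : Set E) : SimpleGraph V :=
  SimpleGraph.fromEdgeSet (ε '' A)

/-- Number of connected components of the graph `(V, ε(A))` (isolated vertices count). -/
def kappa {V E : Type*} (ε : E → Sym2 V) (A : Set E) : ℕ :=
  Nat.card (graphOf ε A).ConnectedComponent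

/-- Rank function `r(A) = |V| − κ(A)`. -/
def rk {V E : Type*} (ε : E → Sym2 V) (A : Set E) : ℕ :=
  Nat.card V - kappa ε A

/-- Tutte polynomial of a multigraph, evaluated at `(x, y) ∈ ℂ²`:
`T(G;x,y) = Σ_{A ⊆ E} (x−1)^{r(E)−r(A)} (y−1)^{|A|−r(A)}`. -/
def tutte {V E : Type*} (ε : E → Sym2 V) (x y : ℂ) : ℂ :=
  ∑ᶠ A : Set E,
    (x - 1) ^ (rk ε Set.univ - rk ε A) * (y - 1) ^ (A.ncard - rk ε A)

/-- The edge index set of the multigraph determined by a multigraph with multiplicities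
`(V, D, μ)`: one copy `Fin (μ d)` of each underlying pair `d ∈ D`. -/
def multiE {V : Type*} (D : Finset (Sym2 V)) (μ : Sym2 V → ℕ) : Type _ :=
  Σ d : D, Fin (μ d.1)

/-- The endpoint map of the multigraph determined by `(V, D, μ)`. -/
def multiEps {V : Type*} (D : Finset (Sym2 V)) (μ : Sym2 V → ℕ) :
    multiE D μ → Sym2 V :=
  fun p => p.1.1

/-- The inequality `|V| ≤ κ(A) + |A|`, by rank–nullity for the coboundary map
`ℚ^V → ℚ^A`: its kernel consists of functions constant on connected components. -/
lemma card_le_kappa_add_ncard {V E : Type*} [Finite V] [Finite E] (ε : E → Sym2 V) (A : Set E) :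
    Nat.card V ≤ kappa ε A + A.ncard := by
  have := Fintype.ofFinite V
  have := Fintype.ofFinite A
  have := Fintype.ofFinite (graphOf ε A).ConnectedComponent
  let δ : (V → ℚ) →ₗ[ℚ] (A → ℚ) :=
    { toFun := fun f e => f (ε e).out.1 - f (ε e).out.2
      map_add' := by intro f g; ext e; simp; ring
      map_smul' := by intro c f; ext e; simp; ring }
  let π : ((graphOf ε A).ConnectedComponent → ℚ) →ₗ[ℚ] (V → ℚ) :=
    LinearMap.funLeft ℚ ℚ (graphOf ε A).connectedComponentMk
  have hker : LinearMap.ker δ ≤ LinearMap.range π := by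
    intro f hf
    have hadj : ∀ u v, (graphOf ε A).Adj u v → f u = f v := by
      intro u v huv
      rw [graphOf, SimpleGraph.fromEdgeSet_adj] at huv
      obtain ⟨⟨e, he, heq⟩, -⟩ := huv
      have h0 : f (ε e).out.1 - f (ε e).out.2 = 0 := congrFun (LinearMap.mem_ker.1 hf) ⟨e, he⟩
      have h1 : s((ε e).out.1, (ε e).out.2) = s(u, v) := by
        rw [← heq]; exact Quot.out_eq _
      rcases Sym2.eq_iff.1 h1 with ⟨h2, h3⟩ | ⟨h2, h3⟩ <;> rw [h2, h3] at h0 <;> linarith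
    have hreach : ∀ u v, (graphOf ε A).Reachable u v → f u = f v := by
      rintro u v ⟨p⟩
      induction p with
      | nil => rfl
      | cons h _ ih => exact (hadj _ _ h).trans ih
    refine ⟨fun c => c.lift f (fun u v p _ => hreach u v ⟨p⟩), ?_⟩
    ext v
    rfl
  have h1 := LinearMap.finrank_range_add_finrank_ker δ
  have h2 := Submodule.finrank_mono hker
  have h3 := LinearMap.finrank_range_le π
  have h4 := Submodule.finrank_le (LinearMap.range δ)
  simp only [Module.finrank_fintype_fun_eq_card] at h1 h3 h4
  rw [kappa, Nat.card_eq_fintype_card, Nat.card_eq_fintype_card, ← Nat.card_coe_set_eq,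
    Nat.card_eq_fintype_card]
  omega

lemma rk_le_ncard {V E : Type*} [Finite V] [Finite E] (ε : E → Sym2 V) (A : Set E) :
    rk ε A ≤ A.ncard := by
  have := card_le_kappa_add_ncard ε A
  unfold rk
  omega

lemma rk_mono {V E : Type*} [Finite V] (ε : E → Sym2 V) {A B : Set E} (h : A ⊆ B) :
    rk ε A ≤ rk ε B :=
  Nat.sub_le_sub_left (SimpleGraph.ConnectedComponent.card_le_card_of_le
    (SimpleGraph.fromEdgeSet_mono (Set.image_mono h))) _

lemma tutte_eq_partition {V E : Type*} [Finite V] [Finite E] (ε : E → Sym2 V) (x y q : ℂ)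
    (hq : q ≠ 0) (hxy : (x - 1) * (y - 1) = q) :
    tutte ε x y =
      (x - 1) ^ rk ε Set.univ * ∑ᶠ A : Set E, q⁻¹ ^ rk ε A * (y - 1) ^ A.ncard := by
  have hx : x - 1 ≠ 0 := by rintro h; simp [h] at hxy; exact hq hxy.symm
  have hy : y - 1 ≠ 0 := by rintro h; simp [h] at hxy; exact hq hxy.symm
  have := Fintype.ofFinite (Set E)
  rw [tutte, finsum_eq_sum_of_fintype, finsum_eq_sum_of_fintype, Finset.mul_sum]
  refine Finset.sum_congr rfl fun A _ => ?_
  rw [pow_sub₀ _ hx (rk_mono ε (Set.subset_univ A)), pow_sub₀ _ hy (rk_le_ncard ε A), ← hxy,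
    mul_inv, mul_pow, inv_pow, inv_pow]
  ring

lemma sum_set_pow_ncard (n : ℕ) (z : ℂ) : ∑ b : Set (Fin n), z ^ b.ncard = (z + 1) ^ n := by
  rw [← Equiv.sum_comp (Fintype.finsetEquivSet (α := Fin n))]
  simpa using Fintype.sum_pow_mul_eq_add_pow (Fin n) z 1

/-- The generating function of the subsets of `Fin n` that are nonempty exactly when `p` holds. -/
lemma sum_filter_pow_ncard (n : ℕ) (z : ℂ) (p : Prop) :
    ∑ b : Set (Fin n) with (b.Nonempty ↔ p), z ^ b.ncard = if p then (z + 1) ^ n - 1 else 1 := by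
  have hempty : ∑ b : Set (Fin n) with ¬ b.Nonempty, z ^ b.ncard = 1 := by
    simp [Set.not_nonempty_iff_eq_empty, Finset.filter_eq']
  split_ifs with hp
  · have := Finset.sum_filter_add_sum_filter_not (Finset.univ : Finset (Set (Fin n)))
      (fun b => b.Nonempty) (fun b => z ^ b.ncard)
    rw [hempty, sum_set_pow_ncard] at this
    simp only [hp, iff_true]
    linear_combination this
  · simpa only [hp, iff_false] using hempty

/-- Subsets of a disjoint union of `Fin (n d)`, weighted by cardinality, grouped by the set of
indices `d` at which they are nonempty. -/
lemma sum_sigma_grouped {D : Type*} [Fintype D] (n : D → ℕ) (g : Set D → ℂ) (z : ℂ) :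
    ∑ A : Set (Σ d, Fin (n d)), g (Sigma.fst '' A) * z ^ A.ncard =
      ∑ S : Set D, g S * ∏ d, if d ∈ S then (z + 1) ^ n d - 1 else 1 := by
  let e : Set (Σ d, Fin (n d)) ≃ (∀ d, Set (Fin (n d))) := Equiv.piCurry (fun _ _ => Prop)
  have he : ∀ A d i, i ∈ e A d ↔ (⟨d, i⟩ : Σ d, Fin (n d)) ∈ A := fun _ _ _ => Iff.rfl
  have hcard : ∀ A, A.ncard = ∑ d, (e A d).ncard := by
    intro A
    let f : A ≃ Σ d, e A d :=
      { toFun := fun a => ⟨a.1.1, a.1.2, a.2⟩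
        invFun := fun a => ⟨⟨a.1, a.2.1⟩, a.2.2⟩
        left_inv := fun _ => rfl
        right_inv := fun _ => rfl }
    rw [← Nat.card_coe_set_eq, Nat.card_congr f, Nat.card_sigma]
    simp only [Nat.card_coe_set_eq]
  have himg : ∀ A, Sigma.fst '' A = {d | (e A d).Nonempty} := by
    intro A
    ext d
    constructor
    · rintro ⟨⟨d, i⟩, h, rfl⟩
      exact ⟨i, h⟩
    · rintro ⟨i, h⟩
      exact ⟨⟨d, i⟩, h, rfl⟩
  simp only [hcard, himg]
  rw [Equiv.sum_comp e (fun B => g {d | (B d).Nonempty} * z ^ ∑ d, (B d).ncard),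
    ← Finset.sum_fiberwise _ (fun B : ∀ d, Set (Fin (n d)) => {d | (B d).Nonempty})]
  refine Finset.sum_congr rfl fun S _ => ?_
  simp only [← sum_filter_pow_ncard]
  rw [Finset.prod_univ_sum, Finset.mul_sum]
  refine Finset.sum_congr ?_ fun B hB => ?_
  · ext B
    simp [Set.ext_iff, Fintype.mem_piFinset]
  · have hS : {d | (B d).Nonempty} = S := by
      ext d
      simpa using Fintype.mem_piFinset.1 hB d
    rw [hS, Finset.prod_pow_eq_pow_sum]

instance {V : Type*} (D : Finset (Sym2 V)) (μ : Sym2 V → ℕ) : Finite (multiE D μ) :=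
  inferInstanceAs (Finite (Σ d : D, Fin (μ d.1)))

/-- The rank of a set of edges is the rank, in the underlying graph `(V, D)`, of the set of pairs
it meets. -/
lemma rk_multiEps {V : Type*} (D : Finset (Sym2 V)) (μ : Sym2 V → ℕ) (A : Set (multiE D μ)) :
    rk (multiEps D μ) A = rk (Subtype.val : D → Sym2 V) (Sigma.fst '' A) := by
  have h : multiEps D μ '' A = Subtype.val '' (Sigma.fst '' A) :=
    Set.image_comp Subtype.val Sigma.fst A
  unfold rk kappa graphOf
  rw [h]

lemma partition_multi {V : Type*} (D : Finset (Sym2 V)) (μ : Sym2 V → ℕ) (p y : ℂ) :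
    ∑ᶠ A : Set (multiE D μ), p ^ rk (multiEps D μ) A * (y - 1) ^ A.ncard =
      ∑ S : Set D, p ^ rk (Subtype.val : D → Sym2 V) S *
        ∏ d, if d ∈ S then y ^ μ d.1 - 1 else 1 := by
  have h := sum_sigma_grouped (fun d : D => μ d.1)
    (fun S => p ^ rk (Subtype.val : D → Sym2 V) S) (y - 1)
  simp only [sub_add_cancel] at h
  rw [← h, ← finsum_eq_sum_of_fintype]
  exact finsum_congr fun A => by rw [rk_multiEps]; rfl

lemma rk_univ_div {V : Type*} (k : ℕ) (hk : 0 < k) (D : Finset (Sym2 V)) (μ : Sym2 V → ℕ)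
    (hdiv : ∀ d, k ∣ μ d) :
    rk (multiEps D (fun d => μ d / k)) Set.univ = rk (multiEps D μ) Set.univ := by
  rw [rk_multiEps, rk_multiEps]
  congr 1
  ext d
  constructor
  · rintro ⟨⟨d, i⟩, -, rfl⟩
    exact ⟨⟨d, ⟨i, i.2.trans_le (Nat.div_le_self _ _)⟩⟩, trivial, rfl⟩
  · rintro ⟨⟨d, i⟩, -, rfl⟩
    have hpos : 0 < μ d.1 := i.pos
    exact ⟨⟨d, ⟨0, Nat.div_pos (Nat.le_of_dvd hpos (hdiv _)) hk⟩⟩, trivial, rfl⟩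

/-- In polar form, `x - 1 = -i e^{-iθ} / sin θ` at `x = -i cot θ`; the theorem uses `θ = π/4k`. -/
lemma cot_point_sub_one (θ : ℂ) (hs : Complex.sin θ ≠ 0) :
    -Complex.I * (Complex.cos θ / Complex.sin θ) - 1 =
      -Complex.I * Complex.exp (-(θ * Complex.I)) / Complex.sin θ := by
  rw [← neg_mul, Complex.exp_mul_I, Complex.cos_neg, Complex.sin_neg]
  field_simp
  linear_combination -Complex.sin θ * Complex.I_sq

lemma exp_point_sub_one (θ : ℂ) :
    Complex.exp (2 * (θ * Complex.I)) - 1 =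
      2 * Complex.I * Complex.exp (θ * Complex.I) * Complex.sin θ := by
  have h : Complex.exp (2 * (θ * Complex.I)) = Complex.exp (θ * Complex.I) ^ 2 := by
    rw [← Complex.exp_nat_mul]; norm_num
  rw [h, Complex.exp_mul_I]
  linear_combination Complex.sin_sq_add_cos_sq θ - Complex.sin θ ^ 2 * Complex.I_sq

lemma sqrt_two_mul_exp_pi_div_four :
    (Real.sqrt 2 : ℂ) * Complex.exp ((Real.pi / 4 : ℝ) * Complex.I) = 1 + Complex.I := by
  have h2 : (Real.sqrt 2 : ℂ) * Real.sqrt 2 = 2 := by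
    rw [← Complex.ofReal_mul, Real.mul_self_sqrt (by norm_num)]; norm_num
  rw [Complex.exp_mul_I, ← Complex.ofReal_cos, ← Complex.ofReal_sin, Real.cos_pi_div_four,
    Real.sin_pi_div_four]
  push_cast
  linear_combination (1 + Complex.I) / 2 * h2


/-- If every multiplicity is a multiple of `k` and `G′` has multiplicities
`μ d / k`, then `T(G; −i cot(π/4k), e^{iπ/2k}) = (√2 e^{iπ(1−k)/(4k)} sin(π/4k))^{−r(G)} ·
T(G′; −i, i)`. -/
theorem statement13 {V : Type*} [Finite V] (k : ℕ) (hk : 0 < k)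
    (D : Finset (Sym2 V)) (μ : Sym2 V → ℕ) (hdiv : ∀ d, k ∣ μ d) :
    tutte (multiEps D μ)
        (-Complex.I *
          ((Real.cos (Real.pi / (4 * k)) : ℂ) / (Real.sin (Real.pi / (4 * k)) : ℂ)))
        (Complex.exp (Complex.I * ((Real.pi : ℂ) / (2 * k)))) =
      ((Real.sqrt 2 : ℂ) *
            Complex.exp (Complex.I * ((Real.pi : ℂ) * (1 - (k : ℂ)) / (4 * k))) *
            (Real.sin (Real.pi / (4 * k)) : ℂ)) ^
          (-(rk (multiEps D μ) Set.univ : ℤ)) *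
        tutte (multiEps D (fun d => μ d / k)) (-Complex.I) Complex.I := by
  have hk0 : (k : ℂ) ≠ 0 := by exact_mod_cast hk.ne'
  have hk1 : (1 : ℝ) ≤ k := by exact_mod_cast hk
  have hpi := Real.pi_pos
  have hsR : Real.sin (Real.pi / (4 * k)) ≠ 0 := by
    refine (Real.sin_pos_of_pos_of_lt_pi (by positivity) ?_).ne'
    rw [div_lt_iff₀ (by positivity)]
    nlinarith
  set θ : ℂ := ((Real.pi / (4 * k) : ℝ) : ℂ) with hθ
  have hθ' : θ = (Real.pi : ℂ) / (4 * k) := by rw [hθ]; push_cast; rfl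
  rw [Complex.ofReal_cos, Complex.ofReal_sin, ← hθ]
  have hs : Complex.sin θ ≠ 0 := by
    rw [hθ, ← Complex.ofReal_sin]; exact_mod_cast hsR
  have hyθ : Complex.I * ((Real.pi : ℂ) / (2 * k)) = 2 * (θ * Complex.I) := by
    rw [hθ']; field_simp; norm_num
  have hwθ : Complex.I * ((Real.pi : ℂ) * (1 - (k : ℂ)) / (4 * k)) =
      θ * Complex.I - ((Real.pi / 4 : ℝ) : ℂ) * Complex.I := by
    rw [hθ']; push_cast; field_simp
  have hyk : Complex.exp (2 * (θ * Complex.I)) ^ k = Complex.I := by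
    have h : (k : ℂ) * (2 * (θ * Complex.I)) = Real.pi / 2 * Complex.I := by
      rw [hθ']; field_simp; norm_num
    rw [← Complex.exp_nat_mul, h, Complex.exp_pi_div_two_mul_I]
  rw [hyθ, hwθ]
  have hx1 := cot_point_sub_one θ hs
  have hy1 := exp_point_sub_one θ
  have hee : Complex.exp (-(θ * Complex.I)) * Complex.exp (θ * Complex.I) = 1 := by
    rw [← Complex.exp_add]; simp
  have hxy : (-Complex.I * (Complex.cos θ / Complex.sin θ) - 1) *
      (Complex.exp (2 * (θ * Complex.I)) - 1) = 2 := by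
    rw [hx1, hy1]
    generalize Complex.exp (-(θ * Complex.I)) = F at hee
    generalize Complex.exp (θ * Complex.I) = E at hee
    field_simp
    linear_combination -Complex.I ^ 2 * hee - Complex.I_sq
  have hxy' : (-Complex.I - 1) * (Complex.I - 1) = 2 := by
    linear_combination -Complex.I_sq
  rw [tutte_eq_partition _ _ _ 2 two_ne_zero hxy, tutte_eq_partition _ _ _ 2 two_ne_zero hxy',
    partition_multi, partition_multi, rk_univ_div k hk D μ hdiv,
    ← mul_assoc (_ ^ (-_ : ℤ))]
  congr 1
  · rw [zpow_neg, zpow_natCast, ← inv_pow, ← mul_pow]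
    congr 1
    have hsq := sqrt_two_mul_exp_pi_div_four
    have h2 : (Real.sqrt 2 : ℂ) ≠ 0 := by
      simp
    have hE := Complex.exp_ne_zero (θ * Complex.I)
    have hF := Complex.exp_ne_zero (((Real.pi / 4 : ℝ) : ℂ) * Complex.I)
    have hF2 : (Real.sqrt 2 : ℂ) * (Real.sqrt 2 : ℂ) = 2 := by
      rw [← Complex.ofReal_mul, Real.mul_self_sqrt (by norm_num)]; norm_num
    rw [hx1, Complex.exp_sub, Complex.exp_neg]
    set F := Complex.exp (((Real.pi / 4 : ℝ) : ℂ) * Complex.I)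
    -- `√2 * F = 1 + i`, whence `F ^ 2 = i`
    have hFF : F ^ 2 = Complex.I := by
      have : (2 : ℂ) * F ^ 2 = 2 * Complex.I := by
        rw [← hF2]
        linear_combination (Real.sqrt 2 * F + 1 + Complex.I) * hsq + Complex.I_sq -
          Complex.I * hF2
      exact mul_left_cancel₀ two_ne_zero this
    field_simp
    linear_combination Real.sqrt 2 * hFF - F * hsq
  · refine Finset.sum_congr rfl fun S _ => ?_
    congr 1
    refine Finset.prod_congr rfl fun d _ => ?_
    have : Complex.exp (2 * (θ * Complex.I)) ^ μ d.1 = Complex.I ^ (μ d.1 / k) := by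
      conv_lhs => rw [← Nat.mul_div_cancel' (hdiv d.1), pow_mul, hyk]
    rw [this]
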